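/- If the item at position 0 of a valid layout ℓ is V, then ℓ is not deserializable. -/

import Mathlib

/-- A layout item: fixed-length field, variable-length field, or pointer `P o s`
with offset `o` and span `s`. -/
inductive Item : Type where
  | F : Item
  | V : Item
  | P : ℕ → ℕ → Item
deriving DecidableEq

/-- A layout is valid if every pointer `P o s` occurring in it satisfies
`o < |ℓ|` and `s ≤ |ℓ| - o`. -/
def ValidLayout (ℓ : List Item) : Prop :=
  ∀ o s : ℕ, Item.P o s ∈ ℓ → o < ℓ.length ∧ s ≤ ℓ.length - o

/-- Facts the parser can know about positions of the layout. -/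
inductive ParseFact : Type where
  | Beg : ℕ → ParseFact
  | Len : ℕ → ParseFact
  | Val : ℕ → ParseFact
deriving DecidableEq

/-- The smallest set of facts closed under the parser's inference rules. -/
inductive Derivable (ℓ : List Item) : ParseFact → Prop where
  | begin : Derivable ℓ (.Beg 0)
  | fieldF (i : ℕ) : ℓ[i]? = some .F → Derivable ℓ (.Len i)
  | fieldP (i o s : ℕ) : ℓ[i]? = some (.P o s) → Derivable ℓ (.Len i)
  | forwardVal (i : ℕ) : Derivable ℓ (.Beg i) → Derivable ℓ (.Len i) → Derivable ℓ (.Val i)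
  | forwardBeg (i : ℕ) : Derivable ℓ (.Beg i) → Derivable ℓ (.Len i) → Derivable ℓ (.Beg (i+1))
  | backwardBeg (i : ℕ) : Derivable ℓ (.Beg (i+1)) → Derivable ℓ (.Len i) → Derivable ℓ (.Beg i)
  | backwardVal (i : ℕ) : Derivable ℓ (.Beg (i+1)) → Derivable ℓ (.Len i) → Derivable ℓ (.Val i)
  | join (i : ℕ) : Derivable ℓ (.Beg i) → Derivable ℓ (.Beg (i+1)) → Derivable ℓ (.Len i)
  | jumpRight (i o s : ℕ) : ℓ[i]? = some (.P o s) → Derivable ℓ (.Val i) →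
      Derivable ℓ (.Beg o) → Derivable ℓ (.Beg (o+s))
  | jumpLeft (i o s : ℕ) : ℓ[i]? = some (.P o s) → Derivable ℓ (.Val i) →
      Derivable ℓ (.Beg (o+s)) → Derivable ℓ (.Beg o)

/-- A layout is deserializable if the length of every varfield is derivable. -/
def Deserializable (ℓ : List Item) : Prop :=
  ∀ j : ℕ, ℓ[j]? = some Item.V → Derivable ℓ (.Len j)

/-- If the first item of a valid layout is a varfield, the layout is not
deserializable. -/
theorem varfield_first_not_deserializable (ℓ : List Item) (hval : ValidLayout ℓ)
    (h0 : ℓ[0]? = some Item.V) : ¬ Deserializable ℓ := by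
  intro hd
  have key : ∀ f, Derivable ℓ f → (match f with
      | .Beg i => i = 0
      | .Len i => i ≠ 0
      | .Val _ => False) := by
    intro f hf
    induction hf with
    | begin => rfl
    | fieldF i h => rintro rfl; simp [h0] at h
    | fieldP i o s h => rintro rfl; simp [h0] at h
    | forwardVal i _ _ h1 h2 => exact h2 h1
    | forwardBeg i _ _ h1 h2 => exact absurd h1 h2
    | backwardBeg i _ _ h1 h2 => exact absurd h1 (Nat.succ_ne_zero i)
    | backwardVal i _ _ h1 h2 => exact absurd h1 (Nat.succ_ne_zero i)
    | join i _ _ h1 h2 => exact absurd h2 (Nat.succ_ne_zero i)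
    | jumpRight i o s _ _ _ h1 _ => exact h1.elim
    | jumpLeft i o s _ _ _ h1 _ => exact h1.elim
  exact key _ (hd 0 h0) rfl
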